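/- Let 0 → A →f→ B →g→ C → 0 be an almost split sequence in C. Then the sequence 0 → (A →id→ A) → (A →f→ B) → (0 → C) → 0 in H(C), with morphisms (1, f) and (0, g), is an almost split sequence in H(C); i.e. it is the almost split sequence in H(C) ending at (0 → C). -/

import Mathlib

open CategoryTheory CategoryTheory.Limits Opposite ZeroObject

universe v u

/-- A short exact sequence `0 → X → Y → Z → 0` in an abelian category. -/
structure IsSES {C : Type u} [Category.{v} C] [Abelian C] {X Y Z : C}
    (f : X ⟶ Y) (g : Y ⟶ Z) : Prop where
  mono : Mono f
  epi : Epi g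
  w : f ≫ g = 0
  ex : (ShortComplex.mk f g w).Exact

/-- `u` is not a section (a split monomorphism). -/
def IsSection {C : Type u} [Category.{v} C] {X Y : C} (u : X ⟶ Y) : Prop :=
  ∃ r : Y ⟶ X, u ≫ r = 𝟙 X

/-- `v` is not a retraction (a split epimorphism). -/
def IsRetractionHom {C : Type u} [Category.{v} C] {Y Z : C} (v : Y ⟶ Z) : Prop :=
  ∃ s : Z ⟶ Y, s ≫ v = 𝟙 Z

/-- `u : X → Y` is minimal left almost split in the subcategory of `C` determined by the
predicate `P`:  `u` is not a section, every non-section `X → W` with `W` in the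
subcategory factors through `u`, and every `h` with `h ∘ u = u` is an automorphism. -/
def MinLAS {C : Type u} [Category.{v} C] (P : C → Prop) {X Y : C} (u : X ⟶ Y) : Prop :=
  (¬ IsSection u) ∧
  (∀ W : C, P W → ∀ f : X ⟶ W, ¬ IsSection f → ∃ t : Y ⟶ W, u ≫ t = f) ∧
  (∀ h : Y ⟶ Y, u ≫ h = u → IsIso h)

/-- `v : Y → Z` is minimal right almost split in the subcategory of `C` determined by
`P`. -/
def MinRAS {C : Type u} [Category.{v} C] (P : C → Prop) {Y Z : C} (v : Y ⟶ Z) : Prop :=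
  (¬ IsRetractionHom v) ∧
  (∀ W : C, P W → ∀ f : W ⟶ Z, ¬ IsRetractionHom f → ∃ t : W ⟶ Y, t ≫ v = f) ∧
  (∀ h : Y ⟶ Y, h ≫ v = v → IsIso h)

/-- `0 → X → Y → Z → 0` is an almost split sequence in the extension-closed subcategory of
the abelian category `C` determined by the predicate `P`. -/
def IsASSGen {C : Type u} [Category.{v} C] [Abelian C] (P : C → Prop) {X Y Z : C}
    (u : X ⟶ Y) (v : Y ⟶ Z) : Prop :=
  P X ∧ P Y ∧ P Z ∧ IsSES u v ∧ MinLAS P u ∧ MinRAS P v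

/-- A short exact sequence in the morphism category `H(C)` of an abelian category `C`,
i.e. a componentwise short exact sequence. -/
def ArrowSES {C : Type u} [Category.{v} C] [Abelian C] {X Y Z : Arrow C}
    (u : X ⟶ Y) (v : Y ⟶ Z) : Prop :=
  IsSES u.left v.left ∧ IsSES u.right v.right

/-- `0 → X → Y → Z → 0` is an almost split sequence in the (extension-closed) subcategory
of the morphism category `H(C)` determined by the predicate `P`. -/
def IsASSArrow {C : Type u} [Category.{v} C] [Abelian C] (P : Arrow C → Prop)
    {X Y Z : Arrow C} (u : X ⟶ Y) (v : Y ⟶ Z) : Prop :=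
  P X ∧ P Y ∧ P Z ∧ ArrowSES u v ∧ MinLAS P u ∧ MinRAS P v

/-- A Krull–Schmidt category: every object is a finite direct sum of objects with local
endomorphism rings. -/
def IsKrullSchmidt (C : Type u) [Category.{v} C] [Abelian C] : Prop :=
  letI : HasFiniteBiproducts C := Abelian.hasFiniteBiproducts (C := C)
  ∀ X : C, ∃ (n : ℕ) (f : Fin n → C),
    (∀ i, IsLocalRing (End (f i))) ∧ Nonempty (X ≅ ⨁ f)

/-!
The morphism `(1, f)` is an isomorphism on sources and starts at an isomorphism, while `(0, g)`
ends at an object with zero source and starts at the kernel `f` of `g`. In both situations sections,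
retractions, factorizations and automorphisms are detected on targets, by the functor
`(X → Y) ↦ Y`: the components on sources are forced by invertibility on the left, and by the
universal property of the kernel on the right. Hence the almost split properties of `f` and `g`
lift to `(1, f)` and `(0, g)`.
-/

section Category

variable {C : Type u} [Category.{v} C]

theorem IsSection.right {X Y : Arrow C} {φ : X ⟶ Y} (hφ : IsSection φ) :
    IsSection φ.right :=
  let ⟨r, hr⟩ := hφ
  ⟨r.right, congrArg CommaMorphism.right hr⟩

theorem IsRetractionHom.right {X Y : Arrow C} {φ : X ⟶ Y} (hφ : IsRetractionHom φ) :
    IsRetractionHom φ.right :=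
  let ⟨s, hs⟩ := hφ
  ⟨s.right, congrArg CommaMorphism.right hs⟩

theorem isSection_of_isSection_right {X Y : Arrow C} [IsIso X.hom] {φ : X ⟶ Y}
    (hφ : IsSection φ.right) : IsSection φ := by
  obtain ⟨r, hr⟩ := hφ
  refine ⟨Arrow.homMk (Y.hom ≫ r ≫ inv X.hom) r (by simp), ?_⟩
  ext
  · calc φ.left ≫ Y.hom ≫ r ≫ inv X.hom
        = X.hom ≫ (φ.right ≫ r) ≫ inv X.hom := by simp only [Arrow.w_assoc, Category.assoc]
      _ = 𝟙 X.left := by rw [hr]; simp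
  · exact hr

theorem isRetractionHom_of_isRetractionHom_right {X Y : Arrow C} (hY : IsInitial Y.left)
    {φ : X ⟶ Y} (hφ : IsRetractionHom φ.right) : IsRetractionHom φ := by
  obtain ⟨s, hs⟩ := hφ
  refine ⟨Arrow.homMk (hY.to X.left) s (hY.hom_ext _ _), ?_⟩
  ext
  · exact hY.hom_ext _ _
  · exact hs

theorem MinLAS.of_right {P : C → Prop} {Q : Arrow C → Prop} (hQ : ∀ W, Q W → P W.right)
    {X Y : Arrow C} [IsIso X.hom] {φ : X ⟶ Y} [IsIso φ.left] (hφ : MinLAS P φ.right) :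
    MinLAS Q φ := by
  obtain ⟨not_section, factors, minimal⟩ := hφ
  refine ⟨fun h ↦ not_section h.right, fun W hW ψ hψ ↦ ?_, fun h hh ↦ ?_⟩
  · obtain ⟨t, ht⟩ := factors W.right (hQ W hW) ψ.right (mt isSection_of_isSection_right hψ)
    have comm : (inv φ.left ≫ ψ.left) ≫ W.hom = Y.hom ≫ t := by
      rw [Category.assoc, IsIso.inv_comp_eq, Arrow.w, Arrow.w_assoc, ht]
    refine ⟨Arrow.homMk (inv φ.left ≫ ψ.left) t comm, ?_⟩
    ext
    · exact IsIso.hom_inv_id_assoc φ.left ψ.left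
    · exact ht
  · have left_eq : φ.left ≫ h.left = φ.left := congrArg CommaMorphism.left hh
    have : IsIso h.right := minimal h.right (congrArg CommaMorphism.right hh)
    have : IsIso h.left := by
      rw [(cancel_epi_id φ.left).1 left_eq]
      infer_instance
    exact Arrow.isIso_of_isIso_left_of_isIso_right h

theorem arrowHom_ext_right {X Y : Arrow C} [Mono Y.hom] {φ ψ : X ⟶ Y}
    (h : φ.right = ψ.right) : φ = ψ := by
  ext
  · rw [← cancel_mono Y.hom, Arrow.w, Arrow.w, h]
  · exact h

end Category

section Kernel

variable {C : Type u} [Category.{v} C] [HasZeroMorphisms C]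

theorem exists_arrowHom_right_eq {X Y : Arrow C} {Z : C} {p : Y.right ⟶ Z} {w : Y.hom ≫ p = 0}
    (hp : IsLimit (KernelFork.ofι Y.hom w)) (t : X.right ⟶ Y.right)
    (ht : X.hom ≫ t ≫ p = 0) : ∃ φ : X ⟶ Y, φ.right = t :=
  let ⟨l, hl⟩ := KernelFork.IsLimit.lift' hp (X.hom ≫ t) ((Category.assoc _ _ _).trans ht)
  ⟨Arrow.homMk l t hl, rfl⟩

theorem isIso_arrowHom_of_isIso_right {Y : Arrow C} {Z : C} {p : Y.right ⟶ Z} {w : Y.hom ≫ p = 0}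
    (hp : IsLimit (KernelFork.ofι Y.hom w)) (h : Y ⟶ Y) [IsIso h.right]
    (hh : h.right ≫ p = p) : IsIso h := by
  have : Mono Y.hom := mono_of_isLimit_fork hp
  have inv_comp : inv h.right ≫ p = p := (IsIso.inv_comp_eq _).2 hh.symm
  obtain ⟨l, hl⟩ := exists_arrowHom_right_eq hp (inv h.right) (inv_comp.symm ▸ w)
  refine ⟨l, arrowHom_ext_right ?_, arrowHom_ext_right ?_⟩ <;> simp [hl]

theorem MinRAS.of_right {P : C → Prop} {Q : Arrow C → Prop} (hQ : ∀ W, Q W → P W.right)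
    {Y Z : Arrow C} (hZ : IsZero Z.left) {φ : Y ⟶ Z} {w : Y.hom ≫ φ.right = 0}
    (hker : IsLimit (KernelFork.ofι Y.hom w)) (hφ : MinRAS P φ.right) : MinRAS Q φ := by
  obtain ⟨not_retraction, factors, minimal⟩ := hφ
  refine ⟨fun h ↦ not_retraction h.right, fun W hW ψ hψ ↦ ?_, fun h hh ↦ ?_⟩
  · obtain ⟨t, ht⟩ := factors W.right (hQ W hW) ψ.right
      (mt (isRetractionHom_of_isRetractionHom_right hZ.isInitial) hψ)
    have comp_eq_zero : W.hom ≫ t ≫ φ.right = 0 := by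
      rw [ht, ← Arrow.w, hZ.eq_of_tgt ψ.left 0, zero_comp]
    obtain ⟨τ, rfl⟩ := exists_arrowHom_right_eq hker t comp_eq_zero
    refine ⟨τ, ?_⟩
    ext
    · exact hZ.eq_of_tgt _ _
    · exact ht
  · have right_eq : h.right ≫ φ.right = φ.right := congrArg CommaMorphism.right hh
    have : IsIso h.right := minimal h.right right_eq
    exact isIso_arrowHom_of_isIso_right hker h right_eq

end Kernel

theorem isSES_of_isIso_of_isZero {C : Type u} [Category.{v} C] [Abelian C] {X Y Z : C}
    (f : X ⟶ Y) [IsIso f] (g : Y ⟶ Z) (hZ : IsZero Z) : IsSES f g where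
  mono := inferInstance
  epi := ⟨fun _ _ _ ↦ hZ.eq_of_src _ _⟩
  w := hZ.eq_of_tgt _ _
  ex := (ShortComplex.exact_iff_epi _ (hZ.eq_of_tgt _ _)).2 (inferInstanceAs (Epi f))

theorem stmt7_general {C : Type u} [Category.{v} C] [Abelian C]
    {P : C → Prop} {Q : Arrow C → Prop} (hQ : ∀ W, Q W → P W.right)
    {A B Cc : C} (f : A ⟶ B) (g : B ⟶ Cc)
    (hA : Q (Arrow.mk (𝟙 A))) (hf : Q (Arrow.mk f)) (hCc : Q (Arrow.mk (0 : (0 : C) ⟶ Cc)))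
    (hass : IsASSGen P f g) :
    IsASSArrow Q
      (Arrow.homMk (u := 𝟙 A) (v := f) (by simp) :
        Arrow.mk (𝟙 A) ⟶ Arrow.mk f)
      (Arrow.homMk (u := (0 : A ⟶ (0 : C))) (v := g)
        (by simp [hass.2.2.2.1.w]) :
        Arrow.mk f ⟶ Arrow.mk (0 : (0 : C) ⟶ Cc)) := by
  obtain ⟨-, -, -, ses, las, ras⟩ := hass
  have : Mono f := ses.mono
  have : IsIso (Arrow.mk (𝟙 A)).hom := inferInstanceAs (IsIso (𝟙 A))
  have : IsIso (Arrow.homMk (u := 𝟙 A) (v := f) (by simp) : Arrow.mk (𝟙 A) ⟶ Arrow.mk f).left :=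
    inferInstanceAs (IsIso (𝟙 A))
  exact ⟨hA, hf, hCc, ⟨isSES_of_isIso_of_isZero (𝟙 A) 0 (isZero_zero C), ses⟩,
    MinLAS.of_right hQ las, MinRAS.of_right hQ (isZero_zero C) ses.ex.fIsKernel ras⟩

/-- Let `0 → A →f→ B →g→ C → 0` be an almost split sequence in `C`.
Then `0 → (A →id→ A) → (A →f→ B) → (0 → C) → 0`, with morphisms `(1, f)` and `(0, g)`,
is an almost split sequence in `H(C)`:  it is the almost split sequence in `H(C)` ending
at `(0 → C)`. -/
theorem stmt7 (k : Type) [Field k]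
    (C : Type u) [Category.{v} C] [Abelian C] [CategoryTheory.Linear k C]
    (hfin : ∀ X Y : C, FiniteDimensional k (X ⟶ Y)) (hKS : IsKrullSchmidt C)
    [EnoughProjectives C] [EnoughInjectives C]
    {A B Cc : C} (f : A ⟶ B) (g : B ⟶ Cc)
    (hass : IsASSGen (fun _ => True) f g) :
    IsASSArrow (fun _ : Arrow C => True)
      (Arrow.homMk (u := 𝟙 A) (v := f) (by simp) :
        Arrow.mk (𝟙 A) ⟶ Arrow.mk f)
      (Arrow.homMk (u := (0 : A ⟶ (0 : C))) (v := g)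
        (by simp [hass.2.2.2.1.w]) :
        Arrow.mk f ⟶ Arrow.mk (0 : (0 : C) ⟶ Cc)) :=
  stmt7_general (fun _ _ ↦ trivial) f g trivial trivial trivial hass
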